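/- Let A be a commutative ring and I ⊆ A an ideal such that A is I-adically complete (the canonical map A → lim_d A/I^d is bijective). Let M be a flat A-module such that M ⊗_A A/I is a free A/I-module. Then Ext^s_A(M, A) = 0 for all s > 0. -/

import Mathlib

open CategoryTheory

universe u

/-!
The property used throughout is "`M` is flat over `A` and `(A ⧸ I) ⊗ M` is projective over
`A ⧸ I`". Unlike the version with "free", it passes to syzygies: for a surjection `p : F → M` with
`F` projective, flatness of `M` makes `0 → ker p → F → M → 0` stay exact after base change to
`A ⧸ I`, where it then splits (`FlatProjMod.exists_retraction`, `FlatProjMod.ker`).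
Hence all syzygies in a projective resolution of `M` have the property, and the vanishing of every
`Ext^s(M, A)` with `s > 0` reduces to that of `Ext^1`: every linear map `f : ker p → A` has to
extend to `F` (`FlatProjMod.exists_extension`).

The extension is built by successive approximation. If `g : F → A` agrees with `f` modulo `I ^ n` on
`ker p`, the error `f - g` maps `ker p` to `I ^ n`; modulo `I ^ (n + 1)` the error factors through
`(A ⧸ I) ⊗ ker p`, so it extends to `F` along the retraction `(A ⧸ I) ⊗ F → (A ⧸ I) ⊗ ker p`, and
projectivity of `F` lifts this extension to a map `F → I ^ n` (`FlatProjMod.exists_extension_mod`).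
Adding it to `g` gives agreement modulo `I ^ (n + 1)`. Since `A` is complete, the approximations
converge to a linear map `F → A`, and since `A` is separated, the limit restricts to `f`.
-/

open scoped TensorProduct

/-- `M` is flat over `A` and its reduction modulo `I`, realized as `(A ⧸ I) ⊗[A] M`, is projective
over `A ⧸ I`. -/
def FlatProjMod {A : Type u} [CommRing A] (I : Ideal A) (M : Type u)
    [AddCommGroup M] [Module A M] : Prop :=
  Module.Flat A M ∧ Module.Projective (A ⧸ I) ((A ⧸ I) ⊗[A] M)

section
variable {A : Type u} [CommRing A] {I : Ideal A} {F M : Type u} [AddCommGroup F] [Module A F]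
  [AddCommGroup M] [Module A M]

theorem FlatProjMod.of_equiv (e : F ≃ₗ[A] M) (h : FlatProjMod I F) : FlatProjMod I M := by
  obtain ⟨h1, h2⟩ := h
  exact ⟨Module.Flat.of_linearEquiv e.symm, Module.Projective.of_equiv (e.baseChange A (A ⧸ I) F M)⟩

/-- The reduction modulo `I` of `0 → ker p → F → M → 0` is split exact: it is exact on the left
because `M` is flat, and it splits because `(A ⧸ I) ⊗ M` is projective. -/
theorem FlatProjMod.exists_retraction (hM : FlatProjMod I M) (p : F →ₗ[A] M)
    (hp : Function.Surjective p) :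
    ∃ r : ((A ⧸ I) ⊗[A] F) →ₗ[A ⧸ I] ((A ⧸ I) ⊗[A] LinearMap.ker p),
      r ∘ₗ (LinearMap.ker p).subtype.baseChange (A ⧸ I) = LinearMap.id := by
  obtain ⟨h1, h2⟩ := hM
  have hex : Function.Exact (LinearMap.ker p).subtype p := p.exact_subtype_ker_map
  have hinj : Function.Injective ((LinearMap.ker p).subtype.baseChange (A ⧸ I)) :=
    LinearMap.lTensor_injective_of_exact_of_flat p hp _ (Submodule.subtype_injective _) hex _
  have hex' : Function.Exact ((LinearMap.ker p).subtype.baseChange (A ⧸ I))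
      (p.baseChange (A ⧸ I)) := lTensor_exact (A ⧸ I) hex hp
  have hsurj : Function.Surjective (p.baseChange (A ⧸ I)) := LinearMap.lTensor_surjective _ hp
  have hsplit := (hex'.split_tfae'.out 0 1).1
    (And.intro hinj (Module.projective_lifting_property _ LinearMap.id hsurj))
  exact hsplit.2

theorem FlatProjMod.ker [Module.Projective A F] (hM : FlatProjMod I M) (p : F →ₗ[A] M)
    (hp : Function.Surjective p) : FlatProjMod I (LinearMap.ker p) := by
  constructor
  · have := hM.1
    rw [Module.Flat.iff_lTensor_preserves_injective_linearMap]
    -- Compare `ker p ⊗ N → ker p ⊗ N'` with the injection `F ⊗ N → F ⊗ N'`; the comparison map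
    -- `ker p ⊗ N → F ⊗ N` is injective because `M` is flat.
    intro N N' _ _ _ _ φ hφ
    have h1 : Function.Injective ((LinearMap.ker p).subtype.rTensor N) := by
      rw [← LinearMap.lTensor_inj_iff_rTensor_inj]
      exact LinearMap.lTensor_injective_of_exact_of_flat p hp _
        (Submodule.subtype_injective _) p.exact_subtype_ker_map N
    have h2 : Function.Injective (φ.lTensor F) :=
      Module.Flat.lTensor_preserves_injective_linearMap φ hφ
    have h3 : (LinearMap.ker p).subtype.rTensor N' ∘ₗ φ.lTensor (LinearMap.ker p) =
        φ.lTensor F ∘ₗ (LinearMap.ker p).subtype.rTensor N := by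
      rw [LinearMap.rTensor_comp_lTensor, LinearMap.lTensor_comp_rTensor]
    have h4 := h2.comp h1
    rw [← LinearMap.coe_comp, ← h3, LinearMap.coe_comp] at h4
    exact h4.of_comp
  · obtain ⟨r, hr⟩ := hM.exists_retraction p hp
    exact Module.Projective.of_split _ r hr

/-- A linear map `e : ker p → X` extends to `F` up to an error in `I • X`: its reduction
`ker p → (A ⧸ I) ⊗ X` extends along the retraction, and the extension lifts to `X` as `F` is
projective. -/
theorem FlatProjMod.exists_extension_mod [Module.Projective A F] (hM : FlatProjMod I M)
    (p : F →ₗ[A] M) (hp : Function.Surjective p) {X : Type u} [AddCommGroup X] [Module A X]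
    (e : LinearMap.ker p →ₗ[A] X) :
    ∃ h : F →ₗ[A] X, ∀ k : LinearMap.ker p, e k - h k ∈ (I • ⊤ : Submodule A X) := by
  obtain ⟨r, hr⟩ := hM.exists_retraction p hp
  let π : X →ₗ[A] (A ⧸ I) ⊗[A] X := TensorProduct.mk A (A ⧸ I) X 1
  have hπ : Function.Surjective π :=
    TensorProduct.mk_surjective A X (A ⧸ I) Ideal.Quotient.mk_surjective
  obtain ⟨h, hh⟩ := Module.projective_lifting_property π
    (e.lTensor (A ⧸ I) ∘ₗ r.restrictScalars A ∘ₗ TensorProduct.mk A (A ⧸ I) F 1) hπ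
  refine ⟨h, fun k ↦ ?_⟩
  have h1 : r (1 ⊗ₜ (k : F)) = 1 ⊗ₜ k := by
    simpa using LinearMap.congr_fun hr (1 ⊗ₜ k)
  have h2 : π (h k) = π (e k) := by
    simpa [h1, π] using LinearMap.congr_fun hh k
  rw [← Submodule.Quotient.eq]
  apply (TensorProduct.quotTensorEquivQuotSMul X I).symm.injective
  simpa [π] using h2.symm

/-- The vanishing of `Ext^1(M, A)`, in the form: linear maps `ker p → A` extend to `F`. -/
theorem FlatProjMod.exists_extension [IsAdicComplete I A] [Module.Projective A F]
    (hM : FlatProjMod I M) (p : F →ₗ[A] M) (hp : Function.Surjective p) (f : LinearMap.ker p →ₗ[A] A) :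
    ∃ g : F →ₗ[A] A, ∀ k : LinearMap.ker p, g k = f k := by
  have step : ∀ (n : ℕ) (g : F →ₗ[A] A), (∀ k : LinearMap.ker p, f k - g k ∈ I ^ n) →
      ∃ g' : F →ₗ[A] A, (∀ k : LinearMap.ker p, f k - g' k ∈ I ^ (n + 1)) ∧
        ∀ x, g' x - g x ∈ I ^ n := by
    intro n g hg
    obtain ⟨h, hh⟩ := hM.exists_extension_mod p hp
      ((f - g ∘ₗ (LinearMap.ker p).subtype).codRestrict (I ^ n) hg)
    -- `h` extends the error `f - g` modulo `I • I ^ n = I ^ (n + 1)`.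
    refine ⟨g + (I ^ n).subtype ∘ₗ h, fun k ↦ ?_, fun x ↦ by simp⟩
    have := Submodule.mem_map_of_mem (f := (I ^ n).subtype) (hh k)
    rw [Submodule.map_smul'', Submodule.map_top, Submodule.range_subtype, smul_eq_mul,
      ← pow_succ'] at this
    replace this : f k - g k - h k ∈ I ^ (n + 1) := this
    simpa [sub_sub] using this
  choose! G hG1 hG2 using step
  let g : ℕ → (F →ₗ[A] A) := fun n ↦ Nat.rec 0 G n
  have hg : ∀ n, ∀ k : LinearMap.ker p, f k - g n k ∈ I ^ n := by
    intro n
    induction n with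
    | zero => simp
    | succ n ih => exact hG1 n _ ih
  have hg' : ∀ n x, g (n + 1) x - g n x ∈ I ^ n := fun n ↦ hG2 n _ (hg n)
  have hmono : ∀ {m n : ℕ} (_ : m ≤ n) (x : F), g n x - g m x ∈ I ^ m := by
    intro m n hmn x
    induction n, hmn using Nat.le_induction with
    | base => simp
    | succ n hmn ih =>
      simpa using add_mem (Ideal.pow_le_pow_right hmn (hg' n x)) ih
  refine ⟨IsAdicComplete.lift I (fun n ↦ Submodule.mkQ _ ∘ₗ g n) ?_, fun k ↦ ?_⟩
  · intro m n hmn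
    ext x
    refine (Submodule.Quotient.eq _).2 ?_
    simpa only [smul_eq_mul, Ideal.mul_top] using! hmono hmn x
  · rw [IsHausdorff.eq_iff_smodEq (I := I)]
    intro n
    rw [SModEq, IsAdicComplete.mk_lift]
    symm
    refine (Submodule.Quotient.eq _).2 ?_
    simpa only [smul_eq_mul, Ideal.mul_top] using! hg n k

/-- `FlatProjMod.exists_extension` in terms of a differential `d` of a resolution: a cocycle `f`, which
by exactness is a map vanishing on `ker d`, is a coboundary `g ∘ d`. -/
theorem FlatProjMod.exists_factor [IsAdicComplete I A] [Module.Projective A F] {E : Type u}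
    [AddCommGroup E] [Module A E] (d : E →ₗ[A] F) (hM : FlatProjMod I (F ⧸ LinearMap.range d))
    (f : E →ₗ[A] A) (hf : LinearMap.ker d ≤ LinearMap.ker f) :
    ∃ g : F →ₗ[A] A, g ∘ₗ d = f := by
  let q : F →ₗ[A] F ⧸ LinearMap.range d := (LinearMap.range d).mkQ
  have hq : LinearMap.ker q = LinearMap.range d := Submodule.ker_mkQ _
  let f' : LinearMap.ker q →ₗ[A] A := (LinearMap.ker d).liftQ f hf ∘ₗ
    d.quotKerEquivRange.symm.toLinearMap ∘ₗ (LinearEquiv.ofEq _ _ hq).toLinearMap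
  obtain ⟨g, hg⟩ := hM.exists_extension q (Submodule.mkQ_surjective _) f'
  refine ⟨g, LinearMap.ext fun x ↦ ?_⟩
  have hx := hg ⟨d x, hq.ge (LinearMap.mem_range_self d x)⟩
  refine hx.trans ?_
  have : d.quotKerEquivRange.symm ⟨d x, LinearMap.mem_range_self d x⟩ =
      Submodule.Quotient.mk x := by
    rw [LinearEquiv.symm_apply_eq]; rfl
  change (LinearMap.ker d).liftQ f hf (d.quotKerEquivRange.symm ⟨d x, _⟩) = f x
  rw [this]
  rfl

end

/-- Let `A` be a commutative ring, `I ⊆ A` an ideal such that `A` is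
`I`-adically complete, and `M` a flat `A`-module such that `M ⊗_A A ⧸ I` (realized
as `(A ⧸ I) ⊗[A] M`) is a free `A ⧸ I`-module.  Then `Ext^s_A(M, A) = 0` for all
`s > 0`. -/
theorem ext_vanishing_of_adically_complete
    (A : Type u) [CommRing A] (I : Ideal A) [IsAdicComplete I A]
    (M : Type u) [AddCommGroup M] [Module A M] [Module.Flat A M]
    [Module.Free (A ⧸ I) (TensorProduct A (A ⧸ I) M)]
    (s : ℕ) (hs : 0 < s) :
    Subsingleton
      (((Ext ℤ (ModuleCat.{u} A) s).obj (Opposite.op (ModuleCat.of A M))).obj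
        (ModuleCat.of A A)) := by
  let P : ProjectiveResolution (ModuleCat.of A M) := projectiveResolution _
  obtain ⟨n, rfl⟩ : ∃ n, s = n + 1 := ⟨s - 1, by omega⟩
  have hP : ∀ i, Module.Projective A (P.complex.X i) := fun i ↦
    (IsProjective.iff_projective _).2 (P.projective i)
  -- The cokernel of `P_(i + 1) → P_i` is the `i`-th syzygy of `M`.
  have key : ∀ i, FlatProjMod I (P.complex.X i ⧸ LinearMap.range (P.complex.d (i + 1) i).hom) := by
    intro i
    induction i with
    | zero =>
      have h0 := P.exact₀.moduleCat_range_eq_ker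
      have hs : Function.Surjective (P.π.f 0).hom :=
        (ModuleCat.epi_iff_surjective (P.π.f 0)).1 inferInstance
      have hM : FlatProjMod I M := ⟨inferInstance, inferInstance⟩
      exact hM.of_equiv ((Submodule.quotEquivOfEq _ _ h0).trans
        ((P.π.f 0).hom.quotKerEquivOfSurjective hs)).symm
    | succ i ih =>
      have h0 := (P.exact_succ i).moduleCat_range_eq_ker
      have h1 := ih.ker (Submodule.mkQ _) (Submodule.mkQ_surjective _)
      rw [Submodule.ker_mkQ] at h1
      exact h1.of_equiv ((Submodule.quotEquivOfEq _ _ h0).trans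
        (P.complex.d (i + 1) i).hom.quotKerEquivRange).symm
  refine ModuleCat.subsingleton_of_isZero (Limits.IsZero.of_iso ?_ (P.isoExt (n + 1) _))
  rw [← HomologicalComplex.exactAt_iff_isZero_homology,
    HomologicalComplex.exactAt_iff' _ n (n + 1) (n + 2) (by simp) (by simp),
    ShortComplex.moduleCat_exact_iff]
  intro (f : P.complex.X (n + 1) ⟶ ModuleCat.of A A)
    (hf : P.complex.d (n + 2) (n + 1) ≫ f = 0)
  obtain ⟨g, hg⟩ := (key n).exists_factor _ f.hom (by
    rw [← (P.exact_succ n).moduleCat_range_eq_ker]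
    rintro _ ⟨y, rfl⟩
    exact ConcreteCategory.congr_hom hf y)
  exact ⟨ModuleCat.ofHom g, ModuleCat.hom_ext hg⟩
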